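/- The set $\{1, \theta, \theta^2, \frac{\theta^3+1}{2}, \frac{\theta^4 - 2\theta^2 + 3\theta - 2}{6}, \frac{\theta^5 - 2\theta^3 + 3\theta^2 - 2\theta}{6}\}$ is an integral basis of $K = \mathbb{Q}(\theta)$, where $\theta$ is a root of $x^6 - 37$. -/

import Mathlib

/-!
Let `θ ^ n = a` and let `z` be integral. The trace of `z * θ ^ (n - i)` is `n * a` times the `i`-th
coordinate of `z`, so `n * a * z ∈ ℤ[θ]`. For squarefree `a`, an integral `y` with `θ * y = c ∈ ℤ`
satisfies `a * y ^ n = c ^ n`, hence `a ∣ c` and `y ∈ ℤ[θ]`; so `a` can be stripped off one factor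
`θ` at a time, and `n * z ∈ ℤ[θ]`.

For `n = 6` and `a ≡ 1 [ZMOD 36]`, write `6 * z = ∑ i, m i * θ ^ i`. Pairing `z * θ ^ k` under the
trace with the integral elements `(θ ^ 3 + 1) / 2` and `(θ ^ 4 + θ ^ 2 + 1) / 3` gives linear
congruences on the `m i` modulo `2` and `3`. Modulo `3` these are not enough: the integrality of
the trace of `z ^ 2` adds the relation `(m 2 - m 4) ^ 2 + (m 1 - m 5) ^ 2 = 0`, whose only solution
in `ZMod 3` is the trivial one.
-/

open Module Polynomial

theorem pow_eq_pow_div_mul_pow_mod {M : Type*} [Monoid M] {θ a : M} {n : ℕ} (hθ : θ ^ n = a)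
    (k : ℕ) : θ ^ k = a ^ (k / n) * θ ^ (k % n) := by
  rw [← hθ, ← pow_mul, ← pow_add, Nat.div_add_mod]

theorem isIntegral_of_pow_eq_algebraMap {R S : Type*} [CommRing R] [Ring S] [Algebra R S] {θ : S}
    {a : R} {n : ℕ} (hn : n ≠ 0) (hθ : θ ^ n = algebraMap R S a) : IsIntegral R θ :=
  .of_pow (Nat.pos_of_ne_zero hn) (hθ ▸ isIntegral_algebraMap)

section Trace

variable {R S : Type*} [CommRing R] [CommRing S] [Algebra R S] {n : ℕ} {θ : S} {a : R}
  {b : Basis (Fin n) R S}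

theorem trace_pow_eq_zero_of_not_dvd (hb : ∀ i, b i = θ ^ (i : ℕ))
    (hθ : θ ^ n = algebraMap R S a) {k : ℕ} (hk : ¬ n ∣ k) :
    Algebra.trace R S (θ ^ k) = 0 := by
  rw [Algebra.trace_eq_matrix_trace b]
  refine Finset.sum_eq_zero fun j _ => ?_
  have hmod : (k + j) % n ≠ j := fun h => hk <|
    (Nat.modEq_zero_iff_dvd).1 <| Nat.ModEq.add_right_cancel' (j : ℕ) <| by
      rw [Nat.ModEq, h, zero_add, Nat.mod_eq_of_lt j.2]
  have hmul : θ ^ k * b j = a ^ ((k + j) / n) • b ⟨(k + j) % n, Nat.mod_lt _ j.pos⟩ := by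
    rw [hb, hb, ← pow_add, pow_eq_pow_div_mul_pow_mod hθ, ← map_pow, Algebra.smul_def]
  rw [Matrix.diag_apply, Algebra.leftMulMatrix_eq_repr_mul, hmul, map_smul, b.repr_self,
    Finsupp.smul_apply, Finsupp.single_eq_of_ne (by simpa [Fin.ext_iff] using hmod.symm), smul_zero]

theorem trace_mul_pow_sub (hb : ∀ i, b i = θ ^ (i : ℕ)) (hθ : θ ^ n = algebraMap R S a)
    (x : S) (i : Fin n) :
    Algebra.trace R S (x * θ ^ (n - i : ℕ)) = n * a * b.repr x i := by
  have hx : x * θ ^ (n - i : ℕ) = ∑ j, b.repr x j • θ ^ (j + (n - i) : ℕ) := by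
    conv_lhs => rw [← b.sum_repr x, Finset.sum_mul]
    simp only [hb, smul_mul_assoc, pow_add]
  rw [hx, map_sum, Finset.sum_eq_single i]
  · rw [Nat.add_sub_cancel' i.2.le, hθ, map_smul, Algebra.trace_algebraMap_of_basis b,
      Fintype.card_fin, smul_eq_mul, nsmul_eq_mul, mul_comm]
  · intro j _ hji
    have hdvd : ¬ n ∣ j + (n - i) := by
      rintro ⟨q, hq⟩
      have := Fin.val_ne_of_ne hji
      have hq1 : q = 1 := by
        have h1 : 0 < q := Nat.pos_of_ne_zero (by rintro rfl; omega)
        have h2 : q < 2 := lt_of_mul_lt_mul_left (a := n) (by omega) (Nat.zero_le n)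
        omega
      subst hq1; omega
    rw [map_smul, trace_pow_eq_zero_of_not_dvd hb hθ hdvd, smul_zero]
  · exact fun h => (h (Finset.mem_univ i)).elim

end Trace

section Squarefree

variable {R S : Type*} [CommRing R] [IsDomain R] [IsIntegrallyClosed R] [CommRing S] [IsDomain S]
  [Algebra R S] [IsTorsionFree R S] {θ : S} {a : R} {n : ℕ}

theorem dvd_of_isIntegral_of_mul_eq {y : S} (hy : IsIntegral R y) (ha : a ≠ 0) {c : R}
    (h : algebraMap R S a * y = algebraMap R S c) : a ∣ c := by
  have hroot : aeval y (C a * X + C (-c)) = 0 := by simp [h]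
  have hdvd := (minpoly.IsIntegrallyClosed.isIntegral_iff_leadingCoeff_dvd hroot
    (leadingCoeff_ne_zero.1 (by rwa [leadingCoeff_linear ha])) fun q hq hqy => by
      rw [degree_linear ha, Nat.WithBot.one_le_iff_zero_lt]
      exact degree_pos_of_aeval_root hq.ne_zero hqy (by simp)).1 hy
  rw [leadingCoeff_linear ha, C_dvd_iff_dvd_coeff] at hdvd
  simpa using hdvd 0

variable [DecompositionMonoid R]

theorem dvd_of_mul_root_eq_of_squarefree (ha : Squarefree a) (hn : n ≠ 0)
    (hθ : θ ^ n = algebraMap R S a) {y : S} (hy : IsIntegral R y) {c : R}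
    (h : θ * y = algebraMap R S c) : a ∣ c := by
  refine (ha.dvd_pow_iff_dvd hn).1 (dvd_of_isIntegral_of_mul_eq (hy.pow n) ha.ne_zero ?_)
  rw [← hθ, ← mul_pow, h, map_pow]

theorem mem_adjoin_of_root_mul_mem (ha : Squarefree a) (hn : n ≠ 0)
    (hθ : θ ^ n = algebraMap R S a) {z : S} (hz : IsIntegral R z)
    (h : θ * z ∈ Algebra.adjoin R {θ}) : z ∈ Algebra.adjoin R {θ} := by
  have hθ_int := isIntegral_of_pow_eq_algebraMap hn hθ
  have hθ_ne : θ ≠ 0 := by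
    rintro rfl
    exact ha.ne_zero (by simpa [zero_pow hn] using hθ.symm)
  have hθ_mem : θ ∈ Algebra.adjoin R {θ} := Algebra.self_mem_adjoin_singleton R θ
  rw [Algebra.adjoin_singleton_eq_range_aeval] at h
  obtain ⟨P, hP : aeval θ P = θ * z⟩ := h
  set w := aeval θ P.divX
  have hw_mem : w ∈ Algebra.adjoin R {θ} := aeval_mem_adjoin_singleton R θ
  have hP_coeff : θ * (z - w) = algebraMap R S (P.coeff 0) := by
    rw [mul_sub, ← hP, sub_eq_iff_eq_add']
    simpa only [map_add, map_mul, aeval_X, aeval_C] using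
      congrArg (aeval θ) P.X_mul_divX_add.symm
  obtain ⟨d, hd⟩ : a ∣ P.coeff 0 := dvd_of_mul_root_eq_of_squarefree ha hn hθ
    (hz.sub (adjoin_le_integralClosure hθ_int hw_mem)) hP_coeff
  have hz_eq : z = w + θ ^ (n - 1) * algebraMap R S d := by
    refine sub_eq_iff_eq_add'.1 (mul_left_cancel₀ hθ_ne ?_)
    rw [hP_coeff, hd, map_mul, ← hθ, ← mul_assoc, mul_pow_sub_one hn]
  rw [hz_eq]
  exact add_mem hw_mem (mul_mem (pow_mem hθ_mem _) (algebraMap_mem _ d))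

theorem mem_adjoin_of_algebraMap_mul_mem (ha : Squarefree a) (hn : n ≠ 0)
    (hθ : θ ^ n = algebraMap R S a) {z : S} (hz : IsIntegral R z)
    (h : algebraMap R S a * z ∈ Algebra.adjoin R {θ}) : z ∈ Algebra.adjoin R {θ} := by
  have hθ_int := isIntegral_of_pow_eq_algebraMap hn hθ
  have hpow (k : ℕ) : θ ^ k * z ∈ Algebra.adjoin R {θ} → z ∈ Algebra.adjoin R {θ} := by
    induction k with
    | zero => simp
    | succ k ih =>
      rw [pow_succ', mul_assoc]
      exact fun hk => ih (mem_adjoin_of_root_mul_mem ha hn hθ ((hθ_int.pow k).mul hz) hk)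
  exact hpow n (hθ ▸ h)

end Squarefree

theorem natCast_mul_mem_adjoin_of_isIntegral {R F K : Type*} [CommRing R] [IsDomain R]
    [IsIntegrallyClosed R] [DecompositionMonoid R] [Field F] [Algebra R F] [IsFractionRing R F]
    [Field K] [Algebra R K] [Algebra F K] [IsScalarTower R F K] {θ : K} {a : R} {n : ℕ}
    {b : Basis (Fin n) F K} (hb : ∀ i, b i = θ ^ (i : ℕ)) (hθ : θ ^ n = algebraMap R K a)
    (ha : Squarefree a) (hn : n ≠ 0) {z : K} (hz : IsIntegral R z) :
    (n : K) * z ∈ Algebra.adjoin R {θ} := by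
  have : FiniteDimensional F K := .of_basis b
  have : IsTorsionFree R K := .trans_faithfulSMul R F K
  have hθ_int := isIntegral_of_pow_eq_algebraMap hn hθ
  have hθF : θ ^ n = algebraMap F K (algebraMap R F a) := by
    rw [hθ, IsScalarTower.algebraMap_apply R F K]
  have htrace (i : Fin n) : ∃ t : R, algebraMap R F t = n * algebraMap R F a * b.repr z i := by
    rw [← trace_mul_pow_sub hb hθF]
    exact IsIntegrallyClosed.isIntegral_iff.1 (Algebra.isIntegral_trace (hz.mul (hθ_int.pow _)))
  choose t ht using htrace
  refine mem_adjoin_of_algebraMap_mul_mem ha hn hθ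
    ((map_natCast (algebraMap R K) n ▸ isIntegral_algebraMap).mul hz) ?_
  have hsum : algebraMap R K a * (n * z) = ∑ i, t i • θ ^ (i : ℕ) := by
    conv_lhs => rw [← b.sum_repr z]
    simp only [Finset.mul_sum, Algebra.smul_def, hb, IsScalarTower.algebraMap_apply R F K, ht,
      map_mul, map_natCast]
    exact Finset.sum_congr rfl fun i _ => by ring
  rw [hsum]
  exact sum_mem fun i _ => Subalgebra.smul_mem _
    (pow_mem (Algebra.self_mem_adjoin_singleton R θ) _) _

theorem exists_sum_pow_of_mem_adjoin {R S : Type*} [CommRing R] [Nontrivial R] [CommRing S]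
    [Algebra R S] {θ : S} {a : R} {n : ℕ} (hn : n ≠ 0) (hθ : θ ^ n = algebraMap R S a) {x : S}
    (hx : x ∈ Algebra.adjoin R {θ}) : ∃ c : Fin n → R, x = ∑ i, c i • θ ^ (i : ℕ) := by
  classical
  have hspan := Submodule.span_range_natDegree_eq_adjoin (monic_X_pow_sub_C a hn)
    (show aeval θ (X ^ n - C a) = 0 by simp [hθ])
  rw [← Subalgebra.mem_toSubmodule, ← hspan, natDegree_X_pow_sub_C] at hx
  have hrange : ((Finset.range n).image (θ ^ ·) : Set S) =
      Set.range fun i : Fin n => θ ^ (i : ℕ) := by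
    ext; simp [Fin.exists_iff]
  rw [hrange, Submodule.mem_span_range_iff_exists_fun] at hx
  exact hx.imp fun c hc => hc.symm

theorem irreducible_X_pow_sub_C_of_prime {R : Type*} [CommRing R] [IsDomain R] {p a : R}
    (hp : Prime p) (hpa : p ∣ a) (hpa2 : ¬ p ^ 2 ∣ a) {n : ℕ} (hn : n ≠ 0) :
    Irreducible (X ^ n - C a : R[X]) := by
  have hmonic : (X ^ n - C a : R[X]).Monic := monic_X_pow_sub_C a hn
  refine IsEisensteinAt.irreducible (𝓟 := Ideal.span {p}) ⟨?_, fun {k} hk => ?_, ?_⟩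
    ((Ideal.span_singleton_prime hp.ne_zero).2 hp) hmonic.isPrimitive
    (by rw [natDegree_X_pow_sub_C]; exact Nat.pos_of_ne_zero hn)
  · rw [hmonic.leadingCoeff, Ideal.mem_span_singleton]
    exact fun h => hp.not_isUnit (isUnit_of_dvd_one h)
  · rw [natDegree_X_pow_sub_C] at hk
    rw [Ideal.mem_span_singleton, coeff_sub, coeff_X_pow, if_neg hk.ne, coeff_C, zero_sub, dvd_neg]
    split_ifs
    exacts [hpa, dvd_zero p]
  · rw [Ideal.span_singleton_pow, Ideal.mem_span_singleton]
    simpa [hn.symm] using hpa2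

theorem irreducible_X_pow_sub_C_of_squarefree {R F : Type*} [CommRing R] [IsDomain R]
    [UniqueFactorizationMonoid R] [Field F] [Algebra R F] [IsFractionRing R F] {a : R}
    (ha : Squarefree a) (ha_unit : ¬ IsUnit a) {n : ℕ} (hn : n ≠ 0) :
    Irreducible (X ^ n - C (algebraMap R F a) : F[X]) := by
  obtain ⟨p, hp, hpa⟩ := WfDvdMonoid.exists_irreducible_factor ha_unit ha.ne_zero
  have hpa2 : ¬ p ^ 2 ∣ a := fun h => hp.not_isUnit (ha p (sq p ▸ h))
  have h := (monic_X_pow_sub_C a hn).irreducible_iff_irreducible_map_fraction_map (K := F) |>.1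
    (irreducible_X_pow_sub_C_of_prime hp.prime hpa hpa2 hn)
  simpa using h

theorem exists_basis_eq_pow_of_irreducible {F K : Type*} [Field F] [Field K] [Algebra F K]
    {θ : K} {a : F} {n : ℕ} (hn : n ≠ 0) (hirr : Irreducible (X ^ n - C a : F[X]))
    (hθ : θ ^ n = algebraMap F K a) (hgen : Algebra.adjoin F {θ} = ⊤) :
    ∃ b : Basis (Fin n) F K, ∀ i, b i = θ ^ (i : ℕ) := by
  have hmonic : (X ^ n - C a : F[X]).Monic := monic_X_pow_sub_C a hn
  have hroot : aeval θ (X ^ n - C a) = 0 := by simp [hθ]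
  have hint : IsIntegral F θ := ⟨_, hmonic, hroot⟩
  let pb := PowerBasis.ofAdjoinEqTop hint hgen
  have hdim : pb.dim = n := by
    rw [PowerBasis.ofAdjoinEqTop_dim hint hgen,
      ← minpoly.eq_of_irreducible_of_monic hirr hroot hmonic, natDegree_X_pow_sub_C]
  refine ⟨pb.basis.reindex (finCongr hdim), fun i => ?_⟩
  rw [Basis.reindex_apply, pb.basis_eq_pow, PowerBasis.ofAdjoinEqTop_gen hint hgen]
  rfl

theorem linearIndependent_of_integralClosure_le_span {ι R F K : Type*} [Fintype ι] [CommRing R]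
    [Field F] [Algebra R F] [IsFractionRing R F] [Field K] [Algebra R K] [Algebra F K]
    [IsScalarTower R F K] [FiniteDimensional F K] {v : ι → K}
    (hspan : Subalgebra.toSubmodule (integralClosure R K) ≤ Submodule.span R (Set.range v))
    (hcard : Fintype.card ι = finrank F K) : LinearIndependent R v := by
  have : IsDomain R := (IsFractionRing.injective R F).isDomain
  have htop : ⊤ ≤ Submodule.span F (Set.range v) := by
    rintro z -
    obtain ⟨d, hd, hdz⟩ := ((IsFractionRing.isAlgebraic_iff R F K).2
      (Algebra.IsAlgebraic.isAlgebraic z)).exists_integral_multiple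
    have hmem : algebraMap R F d • z ∈ Submodule.span F (Set.range v) := by
      rw [algebraMap_smul]
      exact Submodule.span_le_restrictScalars R F _ (hspan hdz)
    exact (Submodule.smul_mem_iff _ (by simpa using hd)).1 hmem
  exact (linearIndependent_of_top_le_span_of_card_eq_finrank htop hcard).restrict_scalars' R

section HalfThird

variable {K : Type*} [Field K] [CharZero K] {a : ℤ}

theorem isIntegral_add_one_div_two (ha : a ≡ 1 [ZMOD 4]) {x : K} (hx : x ^ 2 = a) :
    IsIntegral ℤ ((x + 1) / 2) := by
  obtain ⟨k, hk⟩ := ha.symm.dvd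
  have hxk : x ^ 2 = 1 + 4 * k := by rw [hx, sub_eq_iff_eq_add'.1 hk]; push_cast; ring
  refine ⟨X ^ 2 - X - C k, by monicity!, ?_⟩
  simp only [eval₂_sub, eval₂_X_pow, eval₂_X, eval₂_C]
  rw [eq_intCast]
  linear_combination hxk / 4

theorem isIntegral_sq_add_self_add_one_div_three (ha : a ≡ 1 [ZMOD 9]) {x : K} (hx : x ^ 3 = a) :
    IsIntegral ℤ ((x ^ 2 + x + 1) / 3) := by
  obtain ⟨k, hk⟩ := ha.symm.dvd
  have hxk : x ^ 3 = 1 + 9 * k := by rw [hx, sub_eq_iff_eq_add'.1 hk]; push_cast; ring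
  refine ⟨X ^ 3 - X ^ 2 - C (3 * k) * X - C (3 * k ^ 2), by monicity!, ?_⟩
  simp only [eval₂_sub, eval₂_mul, eval₂_X_pow, eval₂_X, eval₂_C]
  simp only [map_mul, map_pow, map_ofNat, eq_intCast]
  linear_combination (x ^ 3 + 3 * x ^ 2 + 3 * x + 2 + 9 * k) / 27 * hxk

end HalfThird

theorem trace_mul_pow_sub_of_natCast_mul_eq_sum {F K : Type*} [Field F] [CommRing K] [Algebra F K]
    {n : ℕ} {θ : K} {a : F} {b : Basis (Fin n) F K} (hb : ∀ i, b i = θ ^ (i : ℕ))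
    (hθ : θ ^ n = algebraMap F K a) (hn : (n : F) ≠ 0) {z : K} {c : Fin n → F}
    (hz : (n : K) * z = ∑ i, c i • θ ^ (i : ℕ)) (i : Fin n) :
    Algebra.trace F K (z * θ ^ (n - i : ℕ)) = a * c i := by
  have hrepr : b.repr z i = (n : F)⁻¹ * c i := by
    have hzb : (n : F) • z = ∑ i, c i • b i := by
      simpa only [hb, Algebra.smul_def, map_natCast] using hz
    rw [eq_inv_mul_iff_mul_eq₀ hn, ← smul_eq_mul, ← Finsupp.smul_apply, ← map_smul, hzb,
      b.repr_sum_self]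
  rw [trace_mul_pow_sub hb hθ, hrepr]
  field_simp

theorem exists_int_trace_mul_eq {K : Type*} [Field K] [Algebra ℚ K] [FiniteDimensional ℚ K]
    {z y : K} {N : ℕ} (hN : N ≠ 0) (hz : IsIntegral ℤ z) (hy : IsIntegral ℤ (y / N)) :
    ∃ t : ℤ, Algebra.trace ℚ K (z * y) = N * t := by
  have := algebraRat.charZero K
  obtain ⟨t, ht⟩ := IsIntegrallyClosed.isIntegral_iff.1
    (Algebra.isIntegral_trace (L := ℚ) (hz.mul hy))
  refine ⟨t, ?_⟩
  have hzy : z * y = N • (z * (y / N)) := by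
    rw [nsmul_eq_mul]
    field_simp
  rw [hzy, map_nsmul, ← ht, nsmul_eq_mul, eq_intCast]

section Sextic

variable {K : Type*} [Field K] {θ : K} {a : ℤ}

/-- The candidate integral basis of the pure sextic field `ℚ(θ)`, where `θ ^ 6 = a` with
`a` squarefree and `a ≡ 1 [ZMOD 36]`. -/
def pureSexticFamily (θ : K) : Fin 6 → K :=
  ![1, θ, θ ^ 2, (θ ^ 3 + 1) / 2, (θ ^ 4 - 2 * θ ^ 2 + 3 * θ - 2) / 6,
    (θ ^ 5 - 2 * θ ^ 3 + 3 * θ ^ 2 - 2 * θ) / 6]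

variable [CharZero K]

theorem isIntegral_cube_add_one_div_two (ha : a ≡ 1 [ZMOD 36]) (hθ : θ ^ 6 = a) :
    IsIntegral ℤ ((θ ^ 3 + 1) / 2) :=
  isIntegral_add_one_div_two (ha.of_dvd (by norm_num)) (by rw [← hθ, ← pow_mul])

theorem isIntegral_fourth_add_sq_add_one_div_three (ha : a ≡ 1 [ZMOD 36]) (hθ : θ ^ 6 = a) :
    IsIntegral ℤ ((θ ^ 4 + θ ^ 2 + 1) / 3) := by
  have h := isIntegral_sq_add_self_add_one_div_three (x := θ ^ 2) (ha.of_dvd (by norm_num))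
    (by rw [← hθ, ← pow_mul])
  rwa [← pow_mul] at h

theorem isIntegral_pureSexticFamily (ha : a ≡ 1 [ZMOD 36]) (hθ : θ ^ 6 = a) (i : Fin 6) :
    IsIntegral ℤ (pureSexticFamily θ i) := by
  have hθ_int : IsIntegral ℤ θ := isIntegral_of_pow_eq_algebraMap (by norm_num) hθ
  have hα := isIntegral_cube_add_one_div_two ha hθ
  have hβ := (hθ_int.mul hα).sub (isIntegral_fourth_add_sq_add_one_div_three ha hθ)
  have hβ_eq : θ * ((θ ^ 3 + 1) / 2) - (θ ^ 4 + θ ^ 2 + 1) / 3 =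
      (θ ^ 4 - 2 * θ ^ 2 + 3 * θ - 2) / 6 := by ring
  have hγ_eq : θ * ((θ ^ 4 - 2 * θ ^ 2 + 3 * θ - 2) / 6) =
      (θ ^ 5 - 2 * θ ^ 3 + 3 * θ ^ 2 - 2 * θ) / 6 := by ring
  rw [hβ_eq] at hβ
  have hγ := hθ_int.mul hβ
  rw [hγ_eq] at hγ
  fin_cases i
  exacts [isIntegral_one, hθ_int, hθ_int.pow 2, hα, hβ, hγ]

theorem mem_span_pureSexticFamily_of_modEq {z : K} {m : Fin 6 → ℤ}
    (hm : 6 * z = ∑ i, m i • θ ^ (i : ℕ))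
    (h2 : m 0 ≡ m 3 [ZMOD 2] ∧ m 1 ≡ m 4 [ZMOD 2] ∧ m 2 ≡ m 5 [ZMOD 2])
    (h3 : m 0 ≡ m 4 [ZMOD 3] ∧ m 2 ≡ m 4 [ZMOD 3] ∧ m 1 ≡ m 5 [ZMOD 3] ∧ m 3 ≡ m 5 [ZMOD 3]) :
    z ∈ Submodule.span ℤ (Set.range (pureSexticFamily θ)) := by
  simp only [Int.ModEq] at h2 h3
  obtain ⟨c₃, hc₃⟩ : ∃ c, m 3 = 3 * c - 2 * m 5 := ⟨(m 3 + 2 * m 5) / 3, by omega⟩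
  obtain ⟨c₂, hc₂⟩ : ∃ c, m 2 = 6 * c - 2 * m 4 + 3 * m 5 :=
    ⟨(m 2 + 2 * m 4 - 3 * m 5) / 6, by omega⟩
  obtain ⟨c₁, hc₁⟩ : ∃ c, m 1 = 6 * c + 3 * m 4 - 2 * m 5 :=
    ⟨(m 1 - 3 * m 4 + 2 * m 5) / 6, by omega⟩
  obtain ⟨c₀, hc₀⟩ : ∃ c, m 0 = 6 * c + 3 * c₃ - 2 * m 4 :=
    ⟨(m 0 - 3 * c₃ + 2 * m 4) / 6, by omega⟩
  refine Submodule.mem_span_range_iff_exists_fun ℤ |>.2 ⟨![c₀, c₁, c₂, c₃, m 4, m 5], ?_⟩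
  refine mul_left_cancel₀ (show (6 : K) ≠ 0 by norm_num) ?_
  rw [hm, Fin.sum_univ_six, Fin.sum_univ_six, hc₀, hc₁, hc₂, hc₃]
  simp only [pureSexticFamily, zsmul_eq_mul, Matrix.cons_val, Fin.isValue, Fin.coe_ofNat_eq_mod,
    Nat.reduceMod, Int.cast_sub, Int.cast_add, Int.cast_mul, Int.cast_ofNat]
  ring

end Sextic

theorem zmod_three_eq_of_sum_mul_neg_eq_zero {m : Fin 6 → ZMod 3} (h_even : m 2 + m 4 + m 0 = 0)
    (h_odd : m 1 + m 3 + m 5 = 0) (hquad : ∑ i, m i * m (-i) = 0) :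
    m 0 = m 4 ∧ m 2 = m 4 ∧ m 1 = m 5 ∧ m 3 = m 5 := by
  have hsq : ∀ x y : ZMod 3, x ^ 2 + y ^ 2 = 0 → x = 0 ∧ y = 0 := by decide
  have h3 : (3 : ZMod 3) = 0 := rfl
  have hquad' : m 0 * m 0 + m 1 * m 5 + m 2 * m 4 + m 3 * m 3 + m 4 * m 2 + m 5 * m 1 = 0 := by
    rwa [Fin.sum_univ_six] at hquad
  obtain ⟨h24, h15⟩ := hsq (m 2 - m 4) (m 1 - m 5) (by
    linear_combination hquad' + (m 2 + m 4 - m 0) * h_even + (m 1 + m 5 - m 3) * h_odd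
      - 2 * (m 2 * m 4 + m 1 * m 5) * h3)
  refine ⟨?_, sub_eq_zero.1 h24, sub_eq_zero.1 h15, ?_⟩
  · linear_combination h_even - h24 - m 4 * h3
  · linear_combination h_odd - h15 - m 5 * h3

section Congruences

variable {K : Type*} [Field K] [Algebra ℚ K] {θ z : K} {a : ℤ} {b : Basis (Fin 6) ℚ K}
  {m : Fin 6 → ℤ}

theorem exists_trace_mul_pow_eq_of_six_mul_eq_sum (hb : ∀ i, b i = θ ^ (i : ℕ))
    (ha : a ≡ 1 [ZMOD 36]) (hθ : θ ^ 6 = a) (hm : 6 * z = ∑ i, m i • θ ^ (i : ℕ)) :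
    ∃ s : Fin 6 → ℤ, (∀ i : Fin 6, Algebra.trace ℚ K (z * θ ^ (i : ℕ)) = s i) ∧
      ∀ i, s i ≡ m (-i) [ZMOD 36] := by
  have hT (i : Fin 6) : Algebra.trace ℚ K (z * θ ^ (6 - i : ℕ)) = a * m i :=
    trace_mul_pow_sub_of_natCast_mul_eq_sum (c := fun i => (m i : ℚ)) hb (by simp [hθ])
      (by norm_num) (by simpa only [Int.cast_smul_eq_zsmul, Nat.cast_ofNat] using hm) i
  have ha0 : (a : ℚ) ≠ 0 := by
    rintro h
    rw [Int.cast_eq_zero.1 h] at ha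
    exact absurd ha (by decide)
  have hT0 : Algebra.trace ℚ K z = m 0 := by
    refine mul_left_cancel₀ ha0 ?_
    rw [← hT 0, ← smul_eq_mul, ← map_smul, Algebra.smul_def, map_intCast, ← hθ, mul_comm]
    rfl
  refine ⟨fun i => if i = 0 then m 0 else a * m (-i), fun i => ?_, fun i => ?_⟩
  · dsimp only
    split_ifs with hi
    · simpa [hi] using hT0
    · rw [Int.cast_mul, ← hT, Fin.val_neg, if_neg hi, Nat.sub_sub_self i.2.le]
  · dsimp only
    split_ifs with hi
    · rw [hi, neg_zero]
    · simpa using ha.mul_right (m (-i))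

theorem modEq_two_of_six_mul_eq_sum (hb : ∀ i, b i = θ ^ (i : ℕ)) (ha : a ≡ 1 [ZMOD 36])
    (hθ : θ ^ 6 = a) (hz : IsIntegral ℤ z) (hm : 6 * z = ∑ i, m i • θ ^ (i : ℕ)) :
    m 0 ≡ m 3 [ZMOD 2] ∧ m 1 ≡ m 4 [ZMOD 2] ∧ m 2 ≡ m 5 [ZMOD 2] := by
  have := algebraRat.charZero K
  have : FiniteDimensional ℚ K := .of_basis b
  have hθ_int : IsIntegral ℤ θ := isIntegral_of_pow_eq_algebraMap (by norm_num) hθ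
  obtain ⟨s, hs, hsm⟩ := exists_trace_mul_pow_eq_of_six_mul_eq_sum hb ha hθ hm
  have hsum (i j : Fin 6) (hij : (j : ℕ) = i + 3) : s j + s i ≡ 0 [ZMOD 2] := by
    obtain ⟨t, ht⟩ := exists_int_trace_mul_eq two_ne_zero (hz.mul (hθ_int.pow i))
      (by exact_mod_cast isIntegral_cube_add_one_div_two ha hθ)
    rw [mul_assoc, mul_add, mul_one, ← pow_add, ← hij, mul_add, map_add, hs, hs] at ht
    exact Int.modEq_zero_iff_dvd.2 ⟨t, by exact_mod_cast ht⟩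
  have h₀ := hsum 0 3 rfl
  have h₁ := hsum 1 4 rfl
  have h₂ := hsum 2 5 rfl
  have hs2 (i j : Fin 6) (hij : -i = j) : s i ≡ m j [ZMOD 2] :=
    hij ▸ (hsm i).of_dvd (by norm_num)
  have := hs2 0 0 rfl; have := hs2 1 5 rfl; have := hs2 2 4 rfl
  have := hs2 3 3 rfl; have := hs2 4 2 rfl; have := hs2 5 1 rfl
  simp only [Int.ModEq] at *
  refine ⟨by omega, by omega, by omega⟩

theorem six_dvd_sum_mul_of_trace_mul_pow_eq [FiniteDimensional ℚ K] (hz : IsIntegral ℤ z)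
    (hm : 6 * z = ∑ i, m i • θ ^ (i : ℕ)) {s : Fin 6 → ℤ}
    (hs : ∀ i : Fin 6, Algebra.trace ℚ K (z * θ ^ (i : ℕ)) = s i) : 6 ∣ ∑ i, m i * s i := by
  have := algebraRat.charZero K
  obtain ⟨t, ht⟩ := exists_int_trace_mul_eq (y := 6 * z) (N := 6) (by norm_num) hz
    (by simpa using hz)
  simp only [hm, Finset.mul_sum, mul_smul_comm, map_sum, map_zsmul, hs] at ht
  simp only [zsmul_eq_mul] at ht
  exact ⟨t, by exact_mod_cast ht⟩

theorem modEq_three_of_six_mul_eq_sum (hb : ∀ i, b i = θ ^ (i : ℕ)) (ha : a ≡ 1 [ZMOD 36])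
    (hθ : θ ^ 6 = a) (hz : IsIntegral ℤ z) (hm : 6 * z = ∑ i, m i • θ ^ (i : ℕ)) :
    m 0 ≡ m 4 [ZMOD 3] ∧ m 2 ≡ m 4 [ZMOD 3] ∧ m 1 ≡ m 5 [ZMOD 3] ∧ m 3 ≡ m 5 [ZMOD 3] := by
  have := algebraRat.charZero K
  have : FiniteDimensional ℚ K := .of_basis b
  have hθ_int : IsIntegral ℤ θ := isIntegral_of_pow_eq_algebraMap (by norm_num) hθ
  obtain ⟨s, hs, hsm⟩ := exists_trace_mul_pow_eq_of_six_mul_eq_sum hb ha hθ hm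
  have hs3 (i : Fin 6) : (s i : ZMod 3) = m (-i) :=
    (ZMod.intCast_eq_intCast_iff _ _ 3).2 ((hsm i).of_dvd (by norm_num))
  have hsum (i j k : Fin 6) (hij : (j : ℕ) = i + 2) (hik : (k : ℕ) = i + 4) :
      (m (-k) + m (-j) + m (-i) : ZMod 3) = 0 := by
    obtain ⟨t, ht⟩ := exists_int_trace_mul_eq three_ne_zero (hz.mul (hθ_int.pow i))
      (by exact_mod_cast isIntegral_fourth_add_sq_add_one_div_three ha hθ)
    have hpow : z * θ ^ (i : ℕ) * (θ ^ 4 + θ ^ 2 + 1) =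
        z * θ ^ (k : ℕ) + z * θ ^ (j : ℕ) + z * θ ^ (i : ℕ) := by rw [hij, hik]; ring
    rw [hpow, map_add, map_add, hs, hs, hs] at ht
    rw [← hs3, ← hs3, ← hs3]
    exact_mod_cast (ZMod.intCast_zmod_eq_zero_iff_dvd _ 3).2 ⟨t, by exact_mod_cast ht⟩
  have hquad : ∑ i, (m i * m (-i) : ZMod 3) = 0 := by
    simp only [← hs3]
    exact_mod_cast (ZMod.intCast_zmod_eq_zero_iff_dvd _ 3).2
      ((by norm_num : (3 : ℤ) ∣ 6).trans (six_dvd_sum_mul_of_trace_mul_pow_eq hz hm hs))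
  obtain ⟨h04, h24, h15, h35⟩ :=
    zmod_three_eq_of_sum_mul_neg_eq_zero (hsum 0 2 4 rfl rfl) (hsum 1 3 5 rfl rfl) hquad
  have hmod {i j : Fin 6} : (m i : ZMod 3) = m j → m i ≡ m j [ZMOD 3] :=
    (ZMod.intCast_eq_intCast_iff _ _ 3).1
  exact ⟨hmod h04, hmod h24, hmod h15, hmod h35⟩

theorem span_pureSexticFamily_eq_integralClosure (hb : ∀ i, b i = θ ^ (i : ℕ))
    (ha : Squarefree a) (ha36 : a ≡ 1 [ZMOD 36]) (hθ : θ ^ 6 = a) :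
    Submodule.span ℤ (Set.range (pureSexticFamily θ)) =
      Subalgebra.toSubmodule (integralClosure ℤ K) := by
  have := algebraRat.charZero K
  refine le_antisymm (Submodule.span_le.2 ?_) fun z hz => ?_
  · rintro _ ⟨i, rfl⟩
    exact isIntegral_pureSexticFamily ha36 hθ i
  · have hmem := natCast_mul_mem_adjoin_of_isIntegral hb hθ ha (by norm_num) hz
    obtain ⟨m, hm⟩ := exists_sum_pow_of_mem_adjoin (by norm_num) hθ hmem
    rw [Nat.cast_ofNat] at hm
    exact mem_span_pureSexticFamily_of_modEq hm (modEq_two_of_six_mul_eq_sum hb ha36 hθ hz hm)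
      (modEq_three_of_six_mul_eq_sum hb ha36 hθ hz hm)

end Congruences

theorem integral_basis_pure_sextic_general (K : Type*) [Field K] [Algebra ℚ K] {a : ℤ}
    (ha : Squarefree a) (ha1 : a ≠ 1) (ha36 : a ≡ 1 [ZMOD 36]) (θ : K) (hθ : θ ^ 6 = a)
    (hgen : Algebra.adjoin ℚ ({θ} : Set K) = ⊤) :
    LinearIndependent ℤ (pureSexticFamily θ) ∧
      Submodule.span ℤ (Set.range (pureSexticFamily θ)) =
        Subalgebra.toSubmodule (integralClosure ℤ K) := by
  have ha_unit : ¬ IsUnit a := by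
    rw [Int.isUnit_iff]
    rintro (rfl | rfl)
    exacts [ha1 rfl, absurd ha36 (by decide)]
  obtain ⟨b, hb⟩ := exists_basis_eq_pow_of_irreducible (n := 6) (by norm_num)
    (irreducible_X_pow_sub_C_of_squarefree ha ha_unit (by norm_num)) (by simp [hθ]) hgen
  have : FiniteDimensional ℚ K := .of_basis b
  have hspan := span_pureSexticFamily_eq_integralClosure hb ha ha36 hθ
  exact ⟨linearIndependent_of_integralClosure_le_span (F := ℚ) hspan.ge
    (finrank_eq_card_basis b).symm, hspan⟩

open Polynomial in
theorem integral_basis_pure_sextic (K : Type*) [Field K] [Algebra ℚ K]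
    (θ : K) (hθ : θ ^ 6 = 37)
    (hirr : Irreducible ((X : ℚ[X]) ^ 6 - C (37 : ℚ)))
    (hgen : Algebra.adjoin ℚ ({θ} : Set K) = ⊤) :
    LinearIndependent ℤ
        ![(1 : K), θ, θ ^ 2, (θ ^ 3 + 1) / 2,
          (θ ^ 4 - 2 * θ ^ 2 + 3 * θ - 2) / 6,
          (θ ^ 5 - 2 * θ ^ 3 + 3 * θ ^ 2 - 2 * θ) / 6] ∧
      Submodule.span ℤ
          (Set.range ![(1 : K), θ, θ ^ 2, (θ ^ 3 + 1) / 2,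
            (θ ^ 4 - 2 * θ ^ 2 + 3 * θ - 2) / 6,
            (θ ^ 5 - 2 * θ ^ 3 + 3 * θ ^ 2 - 2 * θ) / 6]) =
        Subalgebra.toSubmodule (integralClosure ℤ K) :=
  integral_basis_pure_sextic_general K (a := 37)
    (Int.prime_iff_natAbs_prime.2 (by norm_num)).squarefree (by norm_num) (by decide) θ
    (by exact_mod_cast hθ) hgen
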